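/- arXiv:1811.03962 — 2 statements merged into one kernel-verified Lean document; each statement's English description precedes it below -/
import Mathlib

section
/- (Pointwise linearization of ReLU differences.) Given vectors a, b ∈ ℝ^m and the diagonal matrix D ∈ ℝ^{m×m} with D_{kk} = 1 if a_k ≥ 0 and D_{kk} = 0 otherwise, there exists a diagonal matrix D'' ∈ ℝ^{m×m} such that: (i) |D_{kk} + D''_{kk}| ≤ 1 and |D''_{kk}| ≤ 1 for every k ∈ [m]; (ii) D''_{kk} ≠ 0 only for those k for which the indicators 1[a_k ≥ 0] and 1[b_k ≥ 0] differ; and (iii) φ(a) − φ(b) = (D + D'')(a − b), where φ is the coordinatewise ReLU φ(z)_k = max(z_k, 0). -/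
/-!
The claim decouples over coordinates, so it concerns two numbers `x`, `y` at a time. ReLU is
monotone and 1-Lipschitz, so its secant slope `s` between `x` and `y` lies in `[0, 1]`, and so does
the indicator `1[x ≥ 0]`; hence `D'' = s - 1[x ≥ 0]` lies in `[-1, 1]`. If `x` and `y` lie on the
same side of the kink, ReLU is linear between them with slope `1[x ≥ 0]`, and `D''` vanishes.
-/

open MeasureTheory ProbabilityTheory

noncomputable section

namespace DNNPaper

/-! ### Elementary linear algebra on plain function matrices -/

def mulVec {p q : ℕ} (M : Fin p → Fin q → ℝ) (v : Fin q → ℝ) : Fin p → ℝ :=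
  fun i => ∑ j, M i j * v j

def mmul {p q r : ℕ} (M : Fin p → Fin q → ℝ) (N : Fin q → Fin r → ℝ) :
    Fin p → Fin r → ℝ :=
  fun i k => ∑ j, M i j * N j k

def transpose {p q : ℕ} (M : Fin p → Fin q → ℝ) : Fin q → Fin p → ℝ :=
  fun j i => M i j

def dot {p : ℕ} (u v : Fin p → ℝ) : ℝ := ∑ i, u i * v i

def outer {p q : ℕ} (u : Fin p → ℝ) (v : Fin q → ℝ) : Fin p → Fin q → ℝ :=
  fun i j => u i * v j

def idMat (p : ℕ) : Fin p → Fin p → ℝ := fun i j => if i = j then 1 else 0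

def diagMat {p : ℕ} (dg : Fin p → ℝ) : Fin p → Fin p → ℝ :=
  fun i j => if i = j then dg i else 0

def relu {p : ℕ} (v : Fin p → ℝ) : Fin p → ℝ := fun k => max (v k) 0

/-- diagonal entries of the ReLU sign matrix of a pre-activation vector -/
def signOf {p : ℕ} (g : Fin p → ℝ) : Fin p → ℝ := fun k => if 0 ≤ g k then 1 else 0

/-- Euclidean norm -/
def l2 {p : ℕ} (v : Fin p → ℝ) : ℝ := Real.sqrt (∑ k, v k ^ 2)

/-- max-norm -/
def linf {p : ℕ} (v : Fin p → ℝ) : ℝ := ⨆ k, |v k|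

/-- number of nonzero entries -/
def l0 {p : ℕ} (v : Fin p → ℝ) : ℕ := (Finset.univ.filter fun k => v k ≠ 0).card

/-- Frobenius norm -/
def frob {p q : ℕ} (M : Fin p → Fin q → ℝ) : ℝ := Real.sqrt (∑ i, ∑ j, M i j ^ 2)

/-- spectral norm (ℓ₂ operator norm) -/
def spec {p q : ℕ} (M : Fin p → Fin q → ℝ) : ℝ :=
  sSup {r | ∃ v : Fin q → ℝ, l2 v ≤ 1 ∧ r = l2 (mulVec M v)}

/-- trace (Frobenius) inner product -/
def innerF {p q : ℕ} (M N : Fin p → Fin q → ℝ) : ℝ := ∑ i, ∑ j, M i j * N i j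

/-- `‖W‖₂ = max_ℓ ‖W_ℓ‖₂` for a tuple of matrices -/
def tupleSpec {m L : ℕ} (W : Fin L → Fin m → Fin m → ℝ) : ℝ := ⨆ ℓ, spec (W ℓ)

/-! ### The network -/

variable {𝔡 m d L : ℕ}

/-- `Wat W ℓ` is the weight matrix of layer `ℓ ∈ {1,…,L}` (identity outside this range). -/
def Wat (W : Fin L → Fin m → Fin m → ℝ) (ℓ : ℕ) : Fin m → Fin m → ℝ :=
  if h : 1 ≤ ℓ ∧ ℓ ≤ L then W ⟨ℓ - 1, by omega⟩ else idMat m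

/-- the forward (post-activation) vectors `h_ℓ`, `ℓ = 0,1,…,L` -/
def hseq (A : Fin m → Fin 𝔡 → ℝ) (W : Fin L → Fin m → Fin m → ℝ) (x : Fin 𝔡 → ℝ) :
    ℕ → Fin m → ℝ
  | 0 => relu (mulVec A x)
  | ℓ + 1 =>
      if ℓ + 1 ≤ L then relu (mulVec (Wat W (ℓ + 1)) (hseq A W x ℓ)) else hseq A W x ℓ

/-- the pre-activation vectors `g_ℓ`, `ℓ = 0,1,…,L` -/
def gseq (A : Fin m → Fin 𝔡 → ℝ) (W : Fin L → Fin m → Fin m → ℝ) (x : Fin 𝔡 → ℝ) :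
    ℕ → Fin m → ℝ
  | 0 => mulVec A x
  | ℓ + 1 => mulVec (Wat W (ℓ + 1)) (hseq A W x ℓ)

/-- `chainProd W Dfun a b = (D_b W_b) (D_{b-1} W_{b-1}) ⋯ (D_a W_a)` where `D_ℓ` is the
diagonal matrix with entries `Dfun ℓ`; it is the identity when `b < a`, and factors with
index outside `{1,…,L}` are skipped. -/
def chainProd (W : Fin L → Fin m → Fin m → ℝ) (Dfun : ℕ → Fin m → ℝ) (a : ℕ) :
    ℕ → Fin m → Fin m → ℝ
  | 0 => idMat m
  | b + 1 =>
      if a ≤ b + 1 ∧ b + 1 ≤ L then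
        mmul (mmul (diagMat (Dfun (b + 1))) (Wat W (b + 1))) (chainProd W Dfun a b)
      else chainProd W Dfun a b

/-- `prodDW A W x a b = D_b W_b D_{b-1} W_{b-1} ⋯ D_a W_a` with the sign matrices of input `x` -/
def prodDW (A : Fin m → Fin 𝔡 → ℝ) (W : Fin L → Fin m → Fin m → ℝ) (x : Fin 𝔡 → ℝ)
    (a b : ℕ) : Fin m → Fin m → ℝ :=
  chainProd W (fun ℓ => signOf (gseq A W x ℓ)) a b

/-- `Back_ℓ = B D_L W_L ⋯ D_ℓ W_ℓ` (equal to `B` for `ℓ = L+1`) -/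
def backMat (B : Fin d → Fin m → ℝ) (A : Fin m → Fin 𝔡 → ℝ)
    (W : Fin L → Fin m → Fin m → ℝ) (x : Fin 𝔡 → ℝ) (ℓ : ℕ) : Fin d → Fin m → ℝ :=
  mmul B (prodDW A W x ℓ L)

/-- formula gradient w.r.t. `W_ℓ` with an arbitrary (fake) loss vector `v`:
`D_ℓ (Back_{ℓ+1}ᵀ v) h_{ℓ-1}ᵀ` -/
def gradW (B : Fin d → Fin m → ℝ) (A : Fin m → Fin 𝔡 → ℝ)
    (W : Fin L → Fin m → Fin m → ℝ) (x : Fin 𝔡 → ℝ) (v : Fin d → ℝ) (ℓ : ℕ) :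
    Fin m → Fin m → ℝ :=
  outer (mulVec (diagMat (signOf (gseq A W x ℓ)))
      (mulVec (transpose (backMat B A W x (ℓ + 1))) v))
    (hseq A W x (ℓ - 1))

/-- loss vector `B h_L − y` -/
def lossVec (B : Fin d → Fin m → ℝ) (A : Fin m → Fin 𝔡 → ℝ)
    (W : Fin L → Fin m → Fin m → ℝ) (x : Fin 𝔡 → ℝ) (y : Fin d → ℝ) : Fin d → ℝ :=
  fun j => mulVec B (hseq A W x L) j - y j

/-- per-sample ℓ₂ regression loss `F_i` -/
def objFi (B : Fin d → Fin m → ℝ) (A : Fin m → Fin 𝔡 → ℝ)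
    (W : Fin L → Fin m → Fin m → ℝ) (x : Fin 𝔡 → ℝ) (y : Fin d → ℝ) : ℝ :=
  (1 / 2) * l2 (lossVec B A W x y) ^ 2

/-- total objective `F` -/
def objF {n : ℕ} (B : Fin d → Fin m → ℝ) (A : Fin m → Fin 𝔡 → ℝ)
    (W : Fin L → Fin m → Fin m → ℝ) (x : Fin n → Fin 𝔡 → ℝ)
    (y : Fin n → Fin d → ℝ) : ℝ :=
  ∑ i, objFi B A W (x i) (y i)

/-- formula gradient of the total objective w.r.t. `W_ℓ` -/
def gradF {n : ℕ} (B : Fin d → Fin m → ℝ) (A : Fin m → Fin 𝔡 → ℝ)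
    (W : Fin L → Fin m → Fin m → ℝ) (x : Fin n → Fin 𝔡 → ℝ)
    (y : Fin n → Fin d → ℝ) (ℓ : ℕ) : Fin m → Fin m → ℝ :=
  ∑ i, gradW B A W (x i) (lossVec B A W (x i) (y i)) ℓ

/-! ### Random initialization -/

/-- a `p × q` random matrix with i.i.d. `N(0, v)` entries -/
def gaussMat (p q : ℕ) (v : NNReal) : Measure (Fin p → Fin q → ℝ) :=
  Measure.pi fun _ => Measure.pi fun _ => gaussianReal 0 v

/-- joint law of `(A, W)` at random initialization -/
def initAW (𝔡 m L : ℕ) :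
    Measure ((Fin m → Fin 𝔡 → ℝ) × (Fin L → Fin m → Fin m → ℝ)) :=
  (gaussMat m 𝔡 (2 / m)).prod (Measure.pi fun _ : Fin L => gaussMat m m (2 / m))

/-- joint law of `(A, W, B)` at random initialization -/
def initMeasure (𝔡 m d L : ℕ) :
    Measure ((Fin m → Fin 𝔡 → ℝ) ×
      (Fin L → Fin m → Fin m → ℝ) × (Fin d → Fin m → ℝ)) :=
  (gaussMat m 𝔡 (2 / m)).prod
    ((Measure.pi fun _ : Fin L => gaussMat m m (2 / m)).prod (gaussMat d m (1 / d)))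


lemma ite_one_zero_mem_Icc {R : Type*} [Zero R] [One R] [Preorder R] [ZeroLEOneClass R]
    (p : Prop) [Decidable p] : (if p then 1 else 0 : R) ∈ Set.Icc 0 1 := by
  split_ifs
  · exact Set.right_mem_Icc.mpr zero_le_one
  · exact Set.left_mem_Icc.mpr zero_le_one

lemma max_zero_sub_max_zero_of_nonneg_iff {R : Type*} [Ring R] [LinearOrder R]
    {x y : R} (h : 0 ≤ x ↔ 0 ≤ y) :
    max x 0 - max y 0 = (if 0 ≤ x then 1 else 0) * (x - y) := by
  by_cases hx : 0 ≤ x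
  · rw [if_pos hx, one_mul, max_eq_left hx, max_eq_left (h.mp hx)]
  · have hy : ¬0 ≤ y := mt h.mpr hx
    rw [if_neg hx, zero_mul, max_eq_right (le_of_not_ge hx), max_eq_right (le_of_not_ge hy),
      sub_self]

section ReluSlope

variable {K : Type*} [Field K] [LinearOrder K]

/-- The slope of the secant of ReLU through `x` and `y`. On the diagonal, where `slope` has the junk
value `0`, it is the derivative of ReLU with the convention that the derivative at `0` is `1`. -/
def reluSlope (x y : K) : K :=
  if x = y then (if 0 ≤ x then 1 else 0) else slope (fun t => max t 0) x y

lemma reluSlope_mul_sub (x y : K) : reluSlope x y * (x - y) = max x 0 - max y 0 := by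
  rcases eq_or_ne x y with rfl | hxy
  · simp only [sub_self, mul_zero]
  · rw [reluSlope, if_neg hxy, slope_comm, mul_comm, ← smul_eq_mul, sub_smul_slope, vsub_eq_sub]

lemma reluSlope_of_nonneg_iff {x y : K} (h : 0 ≤ x ↔ 0 ≤ y) :
    reluSlope x y = if 0 ≤ x then 1 else 0 := by
  rcases eq_or_ne x y with hxy | hxy
  · exact if_pos hxy
  · apply mul_right_cancel₀ (sub_ne_zero.mpr hxy)
    rw [reluSlope_mul_sub, max_zero_sub_max_zero_of_nonneg_iff h]

variable [IsStrictOrderedRing K]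

lemma slope_max_const_mem_Icc (c x y : K) : slope (fun t => max t c) x y ∈ Set.Icc 0 1 := by
  have hmono : Monotone fun t : K => max t c := fun _ _ h => max_le_max_right c h
  refine ⟨(hmono.monotoneOn Set.univ).slope_nonneg trivial trivial, ?_⟩
  calc slope (fun t => max t c) x y
      ≤ |(max y c - max x c) / (y - x)| := by rw [slope_def_field]; exact le_abs_self _
    _ = |max y c - max x c| / |y - x| := abs_div _ _
    _ ≤ 1 := div_le_one_of_le₀ (abs_max_sub_max_le_abs y x c) (abs_nonneg _)

lemma reluSlope_mem_Icc (x y : K) : reluSlope x y ∈ Set.Icc 0 1 := by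
  unfold reluSlope
  by_cases hxy : x = y
  · rw [if_pos hxy]
    exact ite_one_zero_mem_Icc (0 ≤ x)
  · rw [if_neg hxy]
    exact slope_max_const_mem_Icc 0 x y

theorem statement18_general {ι : Type*} (a b : ι → K) :
    ∃ D'' : ι → K,
      (∀ k, |(if 0 ≤ a k then (1 : K) else 0) + D'' k| ≤ 1 ∧ |D'' k| ≤ 1) ∧
      (∀ k, D'' k ≠ 0 → ¬((0 ≤ a k) ↔ (0 ≤ b k))) ∧
      (∀ k, max (a k) 0 - max (b k) 0 =
        ((if 0 ≤ a k then (1 : K) else 0) + D'' k) * (a k - b k)) := by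
  refine ⟨fun k => reluSlope (a k) (b k) - if 0 ≤ a k then 1 else 0,
    fun k => ⟨?_, ?_⟩, fun k hne hiff => hne ?_, fun k => ?_⟩
  · obtain ⟨hnonneg, hle⟩ := reluSlope_mem_Icc (a k) (b k)
    rwa [add_sub_cancel, abs_of_nonneg hnonneg]
  · obtain ⟨hslope_nonneg, hslope_le⟩ := reluSlope_mem_Icc (a k) (b k)
    obtain ⟨hind_nonneg, hind_le⟩ := ite_one_zero_mem_Icc (R := K) (0 ≤ a k)
    exact abs_sub_le_of_nonneg_of_le hslope_nonneg hslope_le hind_nonneg hind_le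
  · exact sub_eq_zero_of_eq (reluSlope_of_nonneg_iff hiff)
  · rw [add_sub_cancel, reluSlope_mul_sub]

end ReluSlope

/-- Proposition 11.3, pointwise linearization of ReLU differences. -/
theorem statement18 (m : ℕ) (a b : Fin m → ℝ) :
    ∃ D'' : Fin m → ℝ,
      (∀ k, |(if 0 ≤ a k then (1 : ℝ) else 0) + D'' k| ≤ 1 ∧ |D'' k| ≤ 1) ∧
      (∀ k, D'' k ≠ 0 → ¬((0 ≤ a k) ↔ (0 ≤ b k))) ∧
      (∀ k, max (a k) 0 - max (b k) 0 =
        ((if 0 ≤ a k then (1 : ℝ) else 0) + D'' k) * (a k - b k)) :=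
  statement18_general a b

end DNNPaper
end
end

section
/- (A Gaussian ReLU second-moment lower bound.) Let g₁ and g₂ be independent real random variables, each distributed as N(0, 2) (Gaussian with mean 0 and variance 2). Then for every α ∈ ℝ and every δ ∈ [0, 1/6], E[(φ(g₁) − φ(α·g₁ + δ·g₂))²] ≥ δ²·(1 − δ), where φ(t) = max(t, 0). -/
/-!
Put `x = g₁`, `u = α g₁ + δ g₂`. The law of `(g₁, g₂)` is invariant under negation, so the identity
`(x⁺ - u⁺)² + (x⁻ - u⁻)² = (x - u)² - 2 (x⁺ u⁻ + x⁻ u⁺)` gives, for variance `v`,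
`E (x⁺ - u⁺)² = v / 2 * ((1 - α)² + δ²) - 2 R` with `R = E[x⁺ u⁻]`, and the claim becomes
`2 R ≤ v / 2 * ((1 - α)² + |δ|³)`.

* For `α ≤ 1/2`, subadditivity of the negative part bounds `R` by `v / 2 * (α⁻ + |δ| / π)`. Here
  `(1 - α)²` absorbs `2 α⁻` with `1/4` to spare, and `2 |δ| / π ≤ |δ|³ + 1/4`.
* For `α ≥ 1/2`, the product `x⁺ u⁻` vanishes unless `0 < g₁ < -δ g₂ / α`. Bounding the density of
  `g₁` by its maximum on this interval gives `R ≤ v / 2 * |δ|³ / (3 π α²)`.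
-/

open MeasureTheory ProbabilityTheory

noncomputable section

namespace DNNPaper

/-! ### The network -/

variable {𝔡 m d L : ℕ}

section PosPart

lemma sq_posPart_sub_posPart_add_sq_negPart_sub_negPart (x u : ℝ) :
    (x⁺ - u⁺) ^ 2 + (x⁻ - u⁻) ^ 2 = (x - u) ^ 2 - 2 * (x⁺ * u⁻ + x⁻ * u⁺) := by
  rcases le_total x 0 with hx | hx <;> rcases le_total u 0 with hu | hu <;> simp [hx, hu] <;> ring

lemma sq_posPart_add_sq_negPart (x : ℝ) : x⁺ ^ 2 + x⁻ ^ 2 = x ^ 2 := by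
  rcases le_total x 0 with hx | hx <;> simp [hx]

lemma negPart_add_le_add_negPart (a b : ℝ) : (a + b)⁻ ≤ a⁻ + b⁻ := by
  rw [negPart_def]
  exact max_le (by linarith [neg_le_negPart a, neg_le_negPart b]) (by positivity)

lemma negPart_mul_of_nonneg (a : ℝ) {c : ℝ} (hc : 0 ≤ c) : (a * c)⁻ = a⁻ * c := by
  simp only [negPart_def, max_mul_of_nonneg _ _ hc, neg_mul, zero_mul]

lemma posPart_mul_negPart_add_le (α x w : ℝ) :
    x⁺ * (α * x + w)⁻ ≤ α⁻ * x⁺ ^ 2 + x⁺ * w⁻ := by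
  rcases le_total x 0 with hx | hx
  · simp [hx]
  · calc x⁺ * (α * x + w)⁻ ≤ x⁺ * ((α * x)⁻ + w⁻) := by
          gcongr
          exact negPart_add_le_add_negPart _ _
      _ = α⁻ * x⁺ ^ 2 + x⁺ * w⁻ := by
          rw [negPart_mul_of_nonneg α hx, posPart_of_nonneg hx]
          ring

lemma posPart_mul_negPart_add_eq_indicator {α : ℝ} (hα : 0 < α) (c x : ℝ) :
    x⁺ * (α * x + c)⁻ = (Set.Ioc 0 (c⁻ / α)).indicator (fun x ↦ c⁻ * x - α * x ^ 2) x := by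
  simp only [Set.indicator_apply, Set.mem_Ioc, le_div_iff₀ hα]
  split_ifs with hx
  · have hc : c < 0 := negPart_pos_iff.1 (by nlinarith)
    have hu : α * x + c ≤ 0 := by
      rw [negPart_of_nonpos hc.le] at hx
      linarith
    rw [posPart_of_nonneg hx.1.le, negPart_of_nonpos hu, negPart_of_nonpos hc.le]
    ring
  · rcases le_or_gt x 0 with h0 | h0
    · simp [h0]
    · have hu : 0 ≤ α * x + c := by
        have := not_le.1 fun h ↦ hx ⟨h0, h⟩
        linarith [neg_le_negPart c]
      rw [negPart_of_nonneg hu, mul_zero]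

lemma integrable_posPart_mul_negPart_add {α : ℝ} (hα : 0 < α) (c : ℝ) :
    Integrable fun x : ℝ ↦ x⁺ * (α * x + c)⁻ := by
  simp_rw [posPart_mul_negPart_add_eq_indicator hα]
  rw [integrable_indicator_iff measurableSet_Ioc]
  exact (Continuous.integrableOn_Icc (by fun_prop)).mono_set Set.Ioc_subset_Icc_self

lemma integral_posPart_mul_negPart_add {α : ℝ} (hα : 0 < α) (c : ℝ) :
    ∫ x : ℝ, x⁺ * (α * x + c)⁻ = c⁻ ^ 3 / (6 * α ^ 2) := by
  have hc : 0 ≤ c⁻ / α := by positivity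
  simp_rw [posPart_mul_negPart_add_eq_indicator hα]
  rw [integral_indicator measurableSet_Ioc, ← intervalIntegral.integral_of_le hc,
    intervalIntegral.integral_sub (Continuous.intervalIntegrable (by fun_prop) _ _)
      (Continuous.intervalIntegrable (by fun_prop) _ _),
    intervalIntegral.integral_const_mul, intervalIntegral.integral_const_mul, integral_id,
    integral_pow]
  push_cast
  field_simp
  ring

end PosPart

section Symmetric

lemma integral_eq_zero_of_odd {E : Type*} [AddGroup E] [MeasurableSpace E] [MeasurableNeg E]
    {μ : Measure E} [μ.IsNegInvariant] {f : E → ℝ} (hf : Function.Odd f) : ∫ x, f x ∂μ = 0 := by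
  have h := integral_neg_eq_self f μ
  simp_rw [hf _, integral_neg] at h
  linarith

lemma integral_sq_posPart_sub_posPart {E : Type*} [AddGroup E] [MeasurableSpace E]
    [MeasurableNeg E] {μ : Measure E} [μ.IsNegInvariant] {X U : E → ℝ} (hX : MemLp X 2 μ)
    (hU : MemLp U 2 μ) (hX_odd : Function.Odd X) (hU_odd : Function.Odd U) :
    ∫ p, ((X p)⁺ - (U p)⁺) ^ 2 ∂μ =
      (∫ p, (X p - U p) ^ 2 ∂μ) / 2 - 2 * ∫ p, (X p)⁺ * (U p)⁻ ∂μ := by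
  set F : E → ℝ := fun p ↦ ((X p)⁺ - (U p)⁺) ^ 2 with hF
  set G : E → ℝ := fun p ↦ (X p)⁺ * (U p)⁻ with hG
  have hF_int : Integrable F μ := (hX.pos_part.sub hU.pos_part).integrable_sq
  have hG_int : Integrable G μ := hX.pos_part.integrable_mul hU.neg_part
  have hG_symm_int : Integrable (fun p ↦ G p + G (-p)) μ := hG_int.add hG_int.comp_neg
  have hdiff_int : Integrable (fun p ↦ (X p - U p) ^ 2) μ := (hX.sub hU).integrable_sq
  have hpointwise (p : E) : F p + F (-p) = (X p - U p) ^ 2 - 2 * (G p + G (-p)) := by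
    simpa only [hF, hG, hX_odd p, hU_odd p, posPart_neg, negPart_neg] using
      sq_posPart_sub_posPart_add_sq_negPart_sub_negPart (X p) (U p)
  have hsum : ∫ p, (F p + F (-p)) ∂μ = ∫ p, ((X p - U p) ^ 2 - 2 * (G p + G (-p))) ∂μ :=
    integral_congr_ae (ae_of_all _ hpointwise)
  rw [integral_add hF_int hF_int.comp_neg, integral_neg_eq_self,
    integral_sub hdiff_int (hG_symm_int.const_mul 2),
    integral_const_mul, integral_add hG_int hG_int.comp_neg, integral_neg_eq_self] at hsum
  linarith

instance isNegInvariant_prod {E F : Type*} [Neg E] [Neg F] [MeasurableSpace E] [MeasurableSpace F]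
    [MeasurableNeg E] [MeasurableNeg F] {μ : Measure E} {ν : Measure F} [SFinite μ] [SFinite ν]
    [μ.IsNegInvariant] [ν.IsNegInvariant] : (μ.prod ν).IsNegInvariant where
  neg_eq_self :=
    ((Measure.measurePreserving_neg μ).prod (Measure.measurePreserving_neg ν)).map_eq

variable {μ : Measure ℝ} [μ.IsNegInvariant]

lemma integral_posPart_sq (hμ : MemLp id 2 μ) : ∫ x, x⁺ ^ 2 ∂μ = (∫ x, x ^ 2 ∂μ) / 2 := by
  have hpos : Integrable (fun x : ℝ ↦ x⁺ ^ 2) μ := hμ.pos_part.integrable_sq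
  have hneg : Integrable (fun x : ℝ ↦ x⁻ ^ 2) μ := hμ.neg_part.integrable_sq
  have hsymm : ∫ x, x⁻ ^ 2 ∂μ = ∫ x, x⁺ ^ 2 ∂μ := integral_neg_eq_self (fun x : ℝ ↦ x⁺ ^ 2) μ
  have hsplit : ∫ x, x ^ 2 ∂μ = ∫ x, (x⁺ ^ 2 + x⁻ ^ 2) ∂μ := by
    simp only [sq_posPart_add_sq_negPart]
  rw [hsplit, integral_add hpos hneg, hsymm]
  ring

lemma integral_negPart_mul_pow (δ : ℝ) (n : ℕ) :
    ∫ y, (δ * y)⁻ ^ n ∂μ = |δ| ^ n * ∫ y, y⁺ ^ n ∂μ := by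
  wlog hδ : δ ≤ 0 generalizing δ
  · rw [← integral_neg_eq_self, ← abs_neg δ, ← this (-δ) (by linarith)]
    simp only [mul_neg, neg_mul]
  · rw [← integral_const_mul]
    congr with y
    rw [← mul_pow, abs_of_nonpos hδ, mul_comm, mul_comm (-δ)]
    congr 1
    simp only [negPart_def, posPart_def, max_mul_of_nonneg _ _ (neg_nonneg.2 hδ), zero_mul, mul_neg,
      neg_zero]

variable [IsProbabilityMeasure μ]

lemma integral_sq_linear_prod (hμ : MemLp id 2 μ) (a b : ℝ) :
    ∫ p : ℝ × ℝ, (a * p.1 + b * p.2) ^ 2 ∂μ.prod μ = (a ^ 2 + b ^ 2) * ∫ x, x ^ 2 ∂μ := by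
  have hvar (c : ℝ) : Var[fun x ↦ c * x; μ] = c ^ 2 * ∫ x, x ^ 2 ∂μ := by
    rw [variance_const_mul, variance_of_integral_eq_zero (X := fun x ↦ x) (by fun_prop)
      (integral_eq_zero_of_odd (f := fun x : ℝ ↦ x) fun _ ↦ rfl)]
  rw [← variance_of_integral_eq_zero (by fun_prop) (integral_eq_zero_of_odd fun p ↦ ?_),
    variance_add_prod (X := fun x ↦ a * x) (Y := fun x ↦ b * x) (hμ.const_mul a) (hμ.const_mul b),
    hvar, hvar, add_mul]
  simp only [Prod.fst_neg, Prod.snd_neg]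
  ring

end Symmetric

section SignDisagreement

/-- The moment `E[g₁⁺ (α g₁ + δ g₂)⁻]` for independent `g₁`, `g₂` of law `μ`. It only sees the event
that `g₁` and `α g₁ + δ g₂` have opposite signs, and measures the effect of taking positive parts
on the distance between them. -/
def signDisagreement (μ : Measure ℝ) (α δ : ℝ) : ℝ :=
  ∫ p : ℝ × ℝ, p.1⁺ * (α * p.1 + δ * p.2)⁻ ∂μ.prod μ

variable {μ : Measure ℝ} [IsProbabilityMeasure μ]

lemma memLp_linear_prod (hμ : MemLp id 2 μ) (α δ : ℝ) :
    MemLp (fun p : ℝ × ℝ ↦ α * p.1 + δ * p.2) 2 (μ.prod μ) :=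
  ((hμ.comp_fst μ).const_mul α).add ((hμ.comp_snd μ).const_mul δ)

lemma integrable_signDisagreement (hμ : MemLp id 2 μ) (α δ : ℝ) :
    Integrable (fun p : ℝ × ℝ ↦ p.1⁺ * (α * p.1 + δ * p.2)⁻) (μ.prod μ) :=
  (hμ.comp_fst μ).pos_part.integrable_mul (memLp_linear_prod hμ α δ).neg_part

variable [μ.IsNegInvariant]

lemma integral_sq_posPart_sub_posPart_linear (hμ : MemLp id 2 μ) (α δ : ℝ) :
    ∫ p : ℝ × ℝ, (p.1⁺ - (α * p.1 + δ * p.2)⁺) ^ 2 ∂μ.prod μ =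
      ((1 - α) ^ 2 + δ ^ 2) / 2 * ∫ x, x ^ 2 ∂μ - 2 * signDisagreement μ α δ := by
  have hodd : Function.Odd fun p : ℝ × ℝ ↦ α * p.1 + δ * p.2 := fun p ↦ by
    simp only [Prod.fst_neg, Prod.snd_neg]
    ring
  have hdiff (p : ℝ × ℝ) : p.1 - (α * p.1 + δ * p.2) = (1 - α) * p.1 + -δ * p.2 := by ring
  rw [integral_sq_posPart_sub_posPart (X := Prod.fst) (hμ.comp_fst μ) (memLp_linear_prod hμ α δ)
    (fun _ ↦ rfl) hodd, signDisagreement]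
  simp_rw [hdiff]
  rw [integral_sq_linear_prod hμ, neg_sq]
  ring

lemma signDisagreement_le_linear (hμ : MemLp id 2 μ) (α δ : ℝ) :
    signDisagreement μ α δ ≤ α⁻ * ((∫ x, x ^ 2 ∂μ) / 2) + |δ| * (∫ x, x⁺ ∂μ) ^ 2 := by
  have hsq : Integrable (fun p : ℝ × ℝ ↦ α⁻ * p.1⁺ ^ 2) (μ.prod μ) :=
    ((hμ.comp_fst μ).pos_part.integrable_sq).const_mul _
  have hprod : Integrable (fun p : ℝ × ℝ ↦ p.1⁺ * (δ * p.2)⁻) (μ.prod μ) := by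
    simpa only [zero_mul, zero_add] using integrable_signDisagreement hμ 0 δ
  calc signDisagreement μ α δ
    _ ≤ ∫ p : ℝ × ℝ, (α⁻ * p.1⁺ ^ 2 + p.1⁺ * (δ * p.2)⁻) ∂μ.prod μ :=
        integral_mono (integrable_signDisagreement hμ α δ) (hsq.add hprod)
          fun p ↦ posPart_mul_negPart_add_le α p.1 (δ * p.2)
    _ = α⁻ * ∫ x, x⁺ ^ 2 ∂μ + (∫ x, x⁺ ∂μ) * ∫ y, (δ * y)⁻ ∂μ := by
        rw [integral_add hsq hprod, integral_const_mul, integral_fun_fst (fun x : ℝ ↦ x⁺ ^ 2),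
          probReal_univ, one_smul, integral_prod_mul (fun x : ℝ ↦ x⁺) (fun y : ℝ ↦ (δ * y)⁻)]
    _ = α⁻ * ((∫ x, x ^ 2 ∂μ) / 2) + |δ| * (∫ x, x⁺ ∂μ) ^ 2 := by
        have habs := integral_negPart_mul_pow (μ := μ) δ 1
        simp only [pow_one] at habs
        rw [integral_posPart_sq hμ, habs]
        ring

lemma signDisagreement_le_cubic {M : NNReal} (hμ : MemLp id 3 μ) (hM : μ ≤ M • volume) {α : ℝ}
    (hα : 0 < α) (δ : ℝ) :
    signDisagreement μ α δ ≤ M * |δ| ^ 3 / (6 * α ^ 2) * ∫ x, x⁺ ^ 3 ∂μ := by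
  have hint := integrable_signDisagreement (hμ.mono_exponent (by norm_num)) α δ
  have hneg : MemLp (fun y : ℝ ↦ (δ * y)⁻) 3 μ := (hμ.const_mul δ).neg_part
  have hcube : Integrable (fun y : ℝ ↦ (δ * y)⁻ ^ 3) μ := by
    simpa only [Real.norm_of_nonneg (negPart_nonneg _)] using
      hneg.integrable_norm_pow (p := 3) (by norm_num)
  have hslice (y : ℝ) : ∫ x, x⁺ * (α * x + δ * y)⁻ ∂μ ≤ M * ((δ * y)⁻ ^ 3 / (6 * α ^ 2)) := by
    have hvol := integrable_posPart_mul_negPart_add hα (δ * y)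
    calc ∫ x, x⁺ * (α * x + δ * y)⁻ ∂μ
      _ ≤ ∫ x, x⁺ * (α * x + δ * y)⁻ ∂(M • volume) :=
          integral_mono_measure hM (ae_of_all _ fun x ↦ by positivity) (hvol.smul_measure_nnreal)
      _ = M * ((δ * y)⁻ ^ 3 / (6 * α ^ 2)) := by
          rw [integral_smul_nnreal_measure, integral_posPart_mul_negPart_add hα, NNReal.smul_def,
            smul_eq_mul]
  calc signDisagreement μ α δ
    _ = ∫ y, ∫ x, x⁺ * (α * x + δ * y)⁻ ∂μ ∂μ := integral_prod_symm _ hint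
    _ ≤ ∫ y, M * ((δ * y)⁻ ^ 3 / (6 * α ^ 2)) ∂μ :=
        integral_mono hint.integral_prod_right ((hcube.div_const _).const_mul _) hslice
    _ = M * |δ| ^ 3 / (6 * α ^ 2) * ∫ x, x⁺ ^ 3 ∂μ := by
        rw [integral_const_mul, integral_div, integral_negPart_mul_pow]
        ring

end SignDisagreement

section Gaussian

instance isNegInvariant_gaussianReal (v : NNReal) : (gaussianReal 0 v).IsNegInvariant where
  neg_eq_self := gaussianReal_map_neg.trans (by rw [neg_zero])

lemma integral_sq_gaussianReal (v : NNReal) : ∫ x, x ^ 2 ∂gaussianReal 0 v = v := by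
  rw [← variance_fun_id_gaussianReal (μ := 0) (v := v),
    variance_of_integral_eq_zero (by fun_prop) integral_id_gaussianReal]

lemma gaussianPDFReal_le_gaussianPDFReal_mean (m : ℝ) (v : NNReal) (x : ℝ) :
    gaussianPDFReal m v x ≤ gaussianPDFReal m v m := by
  have hexp : Real.exp (-(x - m) ^ 2 / (2 * v)) ≤ 1 :=
    Real.exp_le_one_iff.2 (div_nonpos_of_nonpos_of_nonneg (by simp [sq_nonneg]) (by positivity))
  simpa [gaussianPDFReal_def] using mul_le_of_le_one_right (by positivity) hexp

lemma mul_sq_gaussianPDFReal_mean (m : ℝ) {v : NNReal} (hv : v ≠ 0) :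
    v * gaussianPDFReal m v m ^ 2 = 1 / (2 * Real.pi) := by
  have hv' : (v : ℝ) ≠ 0 := by exact_mod_cast hv
  simp only [gaussianPDFReal_def, sub_self, zero_pow two_ne_zero, neg_zero, zero_div, Real.exp_zero,
    mul_one, inv_pow, Real.sq_sqrt (show 0 ≤ 2 * Real.pi * v by positivity)]
  field_simp

lemma gaussianReal_le_smul_volume (m : ℝ) {v : NNReal} (hv : v ≠ 0) :
    gaussianReal m v ≤ (gaussianPDFReal m v m).toNNReal • volume := by
  rw [gaussianReal_of_var_ne_zero m hv]
  calc volume.withDensity (gaussianPDF m v)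
    _ ≤ volume.withDensity fun _ ↦ ENNReal.ofReal (gaussianPDFReal m v m) :=
        withDensity_mono (ae_of_all _ fun x ↦
          ENNReal.ofReal_le_ofReal (gaussianPDFReal_le_gaussianPDFReal_mean m v x))
    _ = (gaussianPDFReal m v m).toNNReal • volume := withDensity_const _

lemma integral_posPart_pow_odd_gaussianReal {v : NNReal} (hv : v ≠ 0) (k : ℕ) :
    ∫ x, x⁺ ^ (2 * k + 1) ∂gaussianReal 0 v =
      gaussianPDFReal 0 v 0 * ((2 * v) ^ (k + 1) * k.factorial / 2) := by
  have hindicator (x : ℝ) : gaussianPDFReal 0 v x • x⁺ ^ (2 * k + 1) =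
      (Set.Ioi 0).indicator (fun x ↦ gaussianPDFReal 0 v 0 *
        (x ^ ((2 * k + 1 : ℕ) : ℝ) * Real.exp (-(2 * v : ℝ)⁻¹ * x ^ (2 : ℝ)))) x := by
    simp only [Set.indicator_apply, Set.mem_Ioi]
    split_ifs with hx
    · rw [posPart_of_nonneg hx.le, Real.rpow_natCast, Real.rpow_two, smul_eq_mul]
      simp only [gaussianPDFReal_def, sub_zero, sub_self, zero_pow two_ne_zero, neg_zero, zero_div,
        Real.exp_zero, mul_one]
      ring_nf
    · simp [not_lt.1 hx]
  have hexp : ((2 * k + 1 : ℕ) + 1 : ℝ) / 2 = (k + 1 : ℕ) := by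
    push_cast
    ring
  rw [integral_gaussianReal_eq_integral_smul hv]
  simp_rw [hindicator]
  rw [integral_indicator measurableSet_Ioi, integral_const_mul,
    integral_rpow_mul_exp_neg_mul_rpow (by norm_num)
      (neg_one_lt_zero.trans_le (Nat.cast_nonneg _)) (by positivity), neg_div, hexp,
    Real.rpow_neg (by positivity), Real.rpow_natCast, inv_pow, inv_inv, Nat.cast_add_one,
    Real.Gamma_nat_eq_factorial]
  ring

lemma signDisagreement_gaussianReal_le_linear {v : NNReal} (hv : v ≠ 0) (α δ : ℝ) :
    signDisagreement (gaussianReal 0 v) α δ ≤ v / 2 * (α⁻ + |δ| / Real.pi) := by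
  have hmean : ∫ x, x⁺ ∂gaussianReal 0 v = v * gaussianPDFReal 0 v 0 := by
    have h := integral_posPart_pow_odd_gaussianReal hv 0
    simp only [mul_zero, zero_add, pow_one, Nat.factorial_zero, Nat.cast_one, mul_one] at h
    rw [h]
    ring
  have hbound := signDisagreement_le_linear (memLp_id_gaussianReal (μ := 0) (v := v) 2) α δ
  rw [integral_sq_gaussianReal, hmean] at hbound
  refine hbound.trans_eq ?_
  calc α⁻ * (v / 2) + |δ| * (v * gaussianPDFReal 0 v 0) ^ 2
    _ = α⁻ * (v / 2) + |δ| * v * (v * gaussianPDFReal 0 v 0 ^ 2) := by ring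
    _ = v / 2 * (α⁻ + |δ| / Real.pi) := by
        rw [mul_sq_gaussianPDFReal_mean 0 hv]
        ring

lemma signDisagreement_gaussianReal_le_cubic {v : NNReal} (hv : v ≠ 0) {α : ℝ} (hα : 0 < α)
    (δ : ℝ) :
    signDisagreement (gaussianReal 0 v) α δ ≤ v / 2 * (|δ| ^ 3 / (3 * Real.pi * α ^ 2)) := by
  have hbound := signDisagreement_le_cubic (memLp_id_gaussianReal (μ := 0) (v := v) 3)
    (gaussianReal_le_smul_volume 0 hv) hα δ
  rw [integral_posPart_pow_odd_gaussianReal hv 1,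
    Real.coe_toNNReal _ (gaussianPDFReal_nonneg 0 v 0)] at hbound
  refine hbound.trans_eq ?_
  calc _ = v * |δ| ^ 3 / (3 * α ^ 2) * (v * gaussianPDFReal 0 v 0 ^ 2) := by
        simp only [Nat.factorial_one, Nat.cast_one]
        ring
    _ = v / 2 * (|δ| ^ 3 / (3 * Real.pi * α ^ 2)) := by
        rw [mul_sq_gaussianPDFReal_mean 0 hv]
        ring

lemma two_mul_negPart_add_div_pi_le {α d : ℝ} (hα : α ≤ 1 / 2) (hd : 0 ≤ d) :
    2 * (α⁻ + d / Real.pi) ≤ (1 - α) ^ 2 + d ^ 3 := by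
  have hα_sq : 2 * α⁻ + 1 / 4 ≤ (1 - α) ^ 2 := by
    rcases le_total α 0 with h | h <;> simp only [negPart_of_nonpos, negPart_of_nonneg, h] <;>
      nlinarith
  have hpi : d / Real.pi ≤ d / 3 := by
    gcongr
    exact Real.pi_gt_three.le
  have hcubic : 0 ≤ d ^ 3 - 3 / 4 * d + 1 / 4 :=
    calc 0 ≤ (d - 1 / 2) ^ 2 * (d + 1) := by positivity
      _ = d ^ 3 - 3 / 4 * d + 1 / 4 := by ring
  linarith

lemma two_mul_signDisagreement_gaussianReal_le {v : NNReal} (hv : v ≠ 0) (α δ : ℝ) :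
    2 * signDisagreement (gaussianReal 0 v) α δ ≤ v / 2 * ((1 - α) ^ 2 + |δ| ^ 3) := by
  rcases le_total α (1 / 2) with hα | hα
  · have hlinear := signDisagreement_gaussianReal_le_linear hv α δ
    have hscaled := mul_le_mul_of_nonneg_left (two_mul_negPart_add_div_pi_le hα (abs_nonneg δ))
      (show 0 ≤ (v : ℝ) / 2 by positivity)
    linarith
  · have hcubic := signDisagreement_gaussianReal_le_cubic hv (by linarith) δ
    have hcoeff : 2 ≤ 3 * Real.pi * α ^ 2 := by nlinarith [Real.pi_gt_three]
    have hhalf : |δ| ^ 3 / (3 * Real.pi * α ^ 2) ≤ |δ| ^ 3 / 2 := by gcongr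
    have hscaled := mul_le_mul_of_nonneg_left hhalf (show 0 ≤ (v : ℝ) / 2 by positivity)
    have hsq : 0 ≤ (v : ℝ) / 2 * (1 - α) ^ 2 := by positivity
    linarith

end Gaussian

theorem statement19_general (v : NNReal) (α δ : ℝ) :
    v / 2 * (δ ^ 2 * (1 - |δ|)) ≤
      ∫ p : ℝ × ℝ, (max p.1 0 - max (α * p.1 + δ * p.2) 0) ^ 2
        ∂((gaussianReal 0 v).prod (gaussianReal 0 v)) := by
  rcases eq_or_ne v 0 with rfl | hv
  · simpa using integral_nonneg fun _ ↦ sq_nonneg _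
  have hexpand := integral_sq_posPart_sub_posPart_linear
    (memLp_id_gaussianReal (μ := 0) (v := v) 2) α δ
  rw [integral_sq_gaussianReal] at hexpand
  have hsign := two_mul_signDisagreement_gaussianReal_le hv α δ
  have hcube : |δ| ^ 3 = δ ^ 2 * |δ| := by rw [pow_succ, sq_abs]
  rw [hcube] at hsign
  refine le_trans ?_ hexpand.ge
  linarith

/-- Claim 7.5, a Gaussian ReLU second-moment lower bound. -/
theorem statement19 (α δ : ℝ) (hδ0 : 0 ≤ δ) (hδ : δ ≤ 1 / 6) :
    δ ^ 2 * (1 - δ) ≤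
      ∫ p : ℝ × ℝ, (max p.1 0 - max (α * p.1 + δ * p.2) 0) ^ 2
        ∂((gaussianReal 0 2).prod (gaussianReal 0 2)) := by
  simpa [abs_of_nonneg hδ0] using statement19_general 2 α δ

end DNNPaper
end
end
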